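/- arXiv:2602.16688 — 2 statements merged into one kernel-verified Lean document; each statement's English description precedes it below -/
import Mathlib

section
/- Let (U,d) be a nonempty finite metric space with diameter D := max_{a,b ∈ U} d(a,b), let A, B partition U with A nonempty, let 1 ≤ k ≤ |A|, let x ∉ U, U' := U ∪ {x}, and let d' extend d with d'(u,x) = d'(x,u) := 3D+1 for all u ∈ U. Let α ≥ 1 and let OPT' denote the minimum of cost(T) := max_{u ∈ U'} min_{s ∈ T} d'(u,s) over all T ⊆ U' with |T ∩ A| = k and |T ∩ (B ∪ {x})| = 1. If S' ⊆ U' satisfies |S' ∩ A| = k, |S' ∩ (B ∪ {x})| = 1, x ∈ S', and cost(S') ≤ α · OPT', then S := S' \ {x} satisfies S ⊆ A, |S| = k, and max_{u ∈ U} min_{s ∈ S} d(u,s) ≤ α · OPT, where OPT is the minimum of max_{u ∈ U} min_{s ∈ T} d(u,s) over all T ⊆ A with |T| = k. -/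
/-!
The clustering cost is unchanged when the far point `x = none` is added both as a client and as a
center (`kcost_insertNone`): `x` serves itself at distance `0`, and no point of `U` prefers `x`,
since any center in `U` lies within `D ≤ 3D + 1`. Hence every `k`-subset `T` of `A` gives a
fair-feasible set `T ∪ {x}` of the same cost, so `OPT' ≤ OPT`. A fair-feasible `S'` containing `x`
spends its single center from `B ∪ {x}` on `x`, so it has the form `S ∪ {x}` with `S ⊆ A`,
`|S| = k`, and `cost(S) = cost(S') ≤ α · OPT' ≤ α · OPT`.
-/

/-- The k-center clustering cost of a (nonempty) set `S` of centers on a (finite,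
nonempty) space `X` with distance `dist`: the maximum over clients `u : X` of the
distance from `u` to its nearest center in `S`. -/
noncomputable def kcost {X : Type*} (dist : X → X → ℝ) (S : Finset X) : ℝ :=
  ⨆ u : X, ⨅ s : S, dist u (s : X)

theorem kcost_nonneg {X : Type*} (e : X → X → ℝ) (he : ∀ a b, 0 ≤ e a b) (S : Finset X) :
    0 ≤ kcost e S :=
  Real.iSup_nonneg fun u => Real.iInf_nonneg fun s => he u s

/-- A client in `U` never gains from the extra center `none`, which is at least as far away as
every point of `U`; `T` must be nonempty for this. -/
theorem iInf_insertNone_some {U : Type*} (d : U → U → ℝ) (M : ℝ) (hM : ∀ a b, d a b ≤ M)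
    (d' : Option U → Option U → ℝ) (hUU : ∀ u v : U, d' (some u) (some v) = d u v)
    (hux : ∀ u : U, M ≤ d' (some u) none) (T : Finset U) (hT : T.Nonempty) (u : U) :
    ⨅ s : Finset.insertNone T, d' (some u) (s : Option U) = ⨅ s : T, d u (s : U) := by
  obtain ⟨t, ht⟩ := hT
  have : Nonempty T := ⟨⟨t, ht⟩⟩
  have : Nonempty (Finset.insertNone T) := ⟨⟨some t, Finset.some_mem_insertNone.2 ht⟩⟩
  apply le_antisymm
  · refine le_ciInf fun s => ?_
    rw [← hUU]
    exact ciInf_le (f := fun s : Finset.insertNone T => d' (some u) (s : Option U))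
      (Set.finite_range _).bddBelow ⟨some s, Finset.some_mem_insertNone.2 s.2⟩
  · refine le_ciInf fun s => ?_
    have key : ∀ s' : U, s' ∈ T → ⨅ s : T, d u (s : U) ≤ d u s' := fun s' h =>
      ciInf_le (f := fun s : T => d u (s : U)) (Set.finite_range _).bddBelow ⟨s', h⟩
    obtain ⟨_ | s, hs⟩ := s
    · exact ((key t ht).trans (hM u t)).trans (hux u)
    · rw [hUU]
      exact key s (Finset.some_mem_insertNone.1 hs)

/-- Adjoining a point at distance at least the diameter bound `M`, as a client and as a center,
preserves the clustering cost of a nonempty set of centers. -/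
theorem kcost_insertNone {U : Type*} [Fintype U] [Nonempty U] (d : U → U → ℝ) (M : ℝ)
    (hd : ∀ a b, 0 ≤ d a b) (hM : ∀ a b, d a b ≤ M)
    (d' : Option U → Option U → ℝ) (hUU : ∀ u v : U, d' (some u) (some v) = d u v)
    (hxx : d' none none = 0) (hux : ∀ u : U, M ≤ d' (some u) none)
    (T : Finset U) (hT : T.Nonempty) :
    kcost d' (Finset.insertNone T) = kcost d T := by
  have h := iInf_insertNone_some d M hM d' hUU hux T hT
  apply le_antisymm
  · refine ciSup_le fun u => ?_
    cases u with
    | none =>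
      refine le_trans ?_ (kcost_nonneg d hd T)
      rw [← hxx]
      exact ciInf_le (f := fun s : Finset.insertNone T => d' none (s : Option U))
        (Set.finite_range _).bddBelow ⟨none, Finset.none_mem_insertNone⟩
    | some u =>
      rw [h]
      exact le_ciSup (f := fun u : U => ⨅ s : T, d u (s : U)) (Set.finite_range _).bddAbove u
  · refine ciSup_le fun u => ?_
    rw [← h]
    exact le_ciSup (f := fun u : Option U => ⨅ s : Finset.insertNone T, d' u (s : Option U))
      (Set.finite_range _).bddAbove (some u)

/-- Let `U = A ∪ B` (disjoint), `A` nonempty, `1 ≤ k ≤ |A|`, and let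
`U' = U ∪ {x}` (with `x = none`) place `x` at distance `3D + 1` from every point of
`U`.  If `S' ⊆ U'` is fair-feasible (`|S' ∩ A| = k`, `|S' ∩ (B ∪ {x})| = 1`),
contains `x`, and is an `α`-approximation for the fair instance, then `S := S' \ {x}`
is a feasible `α`-approximation for k-center with forbidden centers on `U`. -/
theorem fair_kcenter_approx_transfers
    {U : Type*} [Fintype U] [Nonempty U] [DecidableEq U] (d : U → U → ℝ)
    (hsymm : ∀ a b : U, d a b = d b a)
    (heq : ∀ a b : U, d a b = 0 ↔ a = b)
    (htri : ∀ a b c : U, d a c ≤ d a b + d b c)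
    (D : ℝ) (hD : D = ⨆ p : U × U, d p.1 p.2)
    (A B : Finset U) (hA : A.Nonempty) (hdisj : Disjoint A B)
    (hunion : A ∪ B = Finset.univ)
    (k : ℕ) (hk1 : 1 ≤ k) (hk2 : k ≤ A.card)
    (d' : Option U → Option U → ℝ)
    (hUU : ∀ u v : U, d' (some u) (some v) = d u v)
    (hxx : d' none none = 0)
    (hux : ∀ u : U, d' (some u) none = 3 * D + 1)
    (hxu : ∀ u : U, d' none (some u) = 3 * D + 1)
    (α : ℝ) (hα : 1 ≤ α)
    (OPT' : ℝ)
    (hOPT' : OPT' = sInf {c : ℝ | ∃ T : Finset (Option U),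
        (T ∩ A.image some).card = k ∧
        (T ∩ insert none (B.image some)).card = 1 ∧
        c = kcost d' T})
    (OPT : ℝ)
    (hOPT : OPT = sInf {c : ℝ | ∃ T : Finset U, T ⊆ A ∧ T.card = k ∧ c = kcost d T})
    (S' : Finset (Option U))
    (hS'A : (S' ∩ A.image some).card = k)
    (hS'B : (S' ∩ insert none (B.image some)).card = 1)
    (hxS' : none ∈ S')
    (happrox : kcost d' S' ≤ α * OPT') :
    S'.eraseNone ⊆ A ∧ S'.eraseNone.card = k ∧ kcost d S'.eraseNone ≤ α * OPT := by
  have hd : ∀ a b, 0 ≤ d a b := fun a b => by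
    have h1 := htri a b a
    rw [(heq a a).2 rfl, hsymm b a] at h1
    linarith
  have hdD : ∀ a b, d a b ≤ D := fun a b => by
    rw [hD]
    exact le_ciSup (f := fun p : U × U => d p.1 p.2) (Set.finite_range _).bddAbove (a, b)
  have hD0 : 0 ≤ D := by
    obtain ⟨u⟩ := ‹Nonempty U›
    exact (hd u u).trans (hdD u u)
  have hux' : ∀ u, D ≤ d' (some u) none := fun u => by rw [hux]; linarith
  have hd' : ∀ a b, 0 ≤ d' a b := by
    rintro (_ | a) (_ | b)
    · rw [hxx]
    · rw [hxu]; linarith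
    · rw [hux]; linarith
    · rw [hUU]; exact hd a b
  have hcost : ∀ T : Finset U, T.card = k → kcost d' (Finset.insertNone T) = kcost d T :=
    fun T hT => kcost_insertNone d D hd hdD d' hUU hxx hux' T (Finset.card_pos.1 (by omega))
  have hle : OPT' ≤ OPT := by
    rw [hOPT]
    refine le_csInf ?_ ?_
    · obtain ⟨T, hTA, hTk⟩ := Finset.exists_subset_card_eq hk2
      exact ⟨_, T, hTA, hTk, rfl⟩
    · rintro c ⟨T, hTA, hTk, rfl⟩
      rw [hOPT']
      refine csInf_le ⟨0, ?_⟩ ⟨Finset.insertNone T, ?_, ?_, (hcost T hTk).symm⟩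
      · rintro c ⟨T, -, -, rfl⟩
        exact kcost_nonneg d' hd' T
      · have : Finset.insertNone T ∩ A.image some = T.image some := by
          ext (_ | a)
          · simp
          · simpa using fun h => hTA h
        rw [this, Finset.card_image_of_injective _ (Option.some_injective U), hTk]
      · rw [Finset.card_eq_one]
        refine ⟨none, ?_⟩
        ext (_ | a)
        · simp
        · simpa using fun h => Finset.disjoint_left.1 hdisj (hTA h)
  have hsub : S'.eraseNone ⊆ A := fun u hu => by
    rw [Finset.mem_eraseNone] at hu
    by_contra hA'
    have hB : u ∈ B := by
      have := Finset.mem_univ u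
      rw [← hunion, Finset.mem_union] at this
      exact this.resolve_left hA'
    -- `u` and `none` would be two distinct centers in `B ∪ {x}`
    have := Finset.card_le_one.1 hS'B.le (some u) (by simp [hu, hB]) none (by simp [hxS'])
    simp at this
  have hcard : S'.eraseNone.card = k := by
    have : S' ∩ A.image some = S'.eraseNone.image some := by
      ext (_ | a)
      · simp
      · simpa using fun h => hsub (Finset.mem_eraseNone.2 h)
    rw [← hS'A, this, Finset.card_image_of_injective _ (Option.some_injective U)]
  refine ⟨hsub, hcard, ?_⟩
  have hS : Finset.insertNone S'.eraseNone = S' := by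
    ext (_ | a) <;> simp [hxS']
  rw [← hcost _ hcard, hS]
  exact happrox.trans (mul_le_mul_of_nonneg_left hle (by linarith))
end

section
/- Let (U,d) be a finite metric space with at least two points partitioned into disjoint nonempty groups G1 and G2, let r1, r2 ≥ 1 with r1 ≤ |G1|, r2 ≤ |G2|, and k := r1 + r2 < |U|, and let (U',d') be the one-per-group blow-up with groups H^i_a. Then the minimum over all Ŝ ⊆ U' containing exactly one point from each group H^i_a of max_{x ∈ U'} min_{s ∈ Ŝ} d'(x,s) equals the minimum over all S ⊆ U with |S ∩ G1| = r1 and |S ∩ G2| = r2 of max_{u ∈ U} min_{s ∈ S} d(u,s). -/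
/-- The one-per-group blow-up of a two-group instance: each point of `G1` gets `r1`
labeled copies and each point of `G2` gets `r2` labeled copies. -/
abbrev Blowup {U : Type*} (G1 G2 : Finset U) (r1 r2 : ℕ) : Type _ :=
  ({u // u ∈ G1} × Fin r1) ⊕ ({u // u ∈ G2} × Fin r2)

/-- Projection of a copy to its original point. -/
def bproj {U : Type*} {G1 G2 : Finset U} {r1 r2 : ℕ} : Blowup G1 G2 r1 r2 → U :=
  Sum.elim (fun p => p.1.1) (fun p => p.1.1)

/-- The group `H¹ₐ` of `a`-th copies of points of `G1`. -/
def grp1 {U : Type*} [DecidableEq U] (G1 G2 : Finset U) (r1 r2 : ℕ) (a : Fin r1) :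
    Finset (Blowup G1 G2 r1 r2) :=
  Finset.univ.image fun u : {u // u ∈ G1} => Sum.inl (u, a)

/-- The group `H²ₐ` of `a`-th copies of points of `G2`. -/
def grp2 {U : Type*} [DecidableEq U] (G1 G2 : Finset U) (r1 r2 : ℕ) (a : Fin r2) :
    Finset (Blowup G1 G2 r1 r2) :=
  Finset.univ.image fun u : {u // u ∈ G2} => Sum.inr (u, a)

/-- `S` contains exactly one point from each of the `r1 + r2` groups of the blow-up. -/
def OnePerGroup {U : Type*} [DecidableEq U] (G1 G2 : Finset U) (r1 r2 : ℕ)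
    (S : Finset (Blowup G1 G2 r1 r2)) : Prop :=
  (∀ a : Fin r1, (S ∩ grp1 G1 G2 r1 r2 a).card = 1) ∧
  (∀ a : Fin r2, (S ∩ grp2 G1 G2 r1 r2 a).card = 1)


lemma kcost_le {X : Type*} [Finite X] [Nonempty X] {dist : X → X → ℝ} {S : Finset X} {c : ℝ}
    (h : ∀ u, ∃ s ∈ S, dist u s ≤ c) : kcost dist S ≤ c := by
  refine ciSup_le fun u => ?_
  obtain ⟨s, hs, hle⟩ := h u
  exact (ciInf_le (Set.finite_range fun s : S => dist u (s : X)).bddBelow ⟨s, hs⟩).trans hle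

lemma exists_le_kcost {X : Type*} [Finite X] (dist : X → X → ℝ) {S : Finset X}
    (hS : S.Nonempty) (u : X) : ∃ s ∈ S, dist u s ≤ kcost dist S := by
  have : Nonempty S := hS.to_subtype
  obtain ⟨s, hs⟩ := exists_eq_ciInf_of_finite (f := fun s : S => dist u (s : X))
  refine ⟨s, s.2, ?_⟩
  rw [hs]
  exact le_ciSup (f := fun u : X => ⨅ s : S, dist u (s : X)) (Set.finite_range _).bddAbove u

section Transport

variable {U : Type*} [Fintype U] [DecidableEq U] {G1 G2 : Finset U} {r1 r2 : ℕ}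

lemma exists_mem_bproj_eq (hunion : G1 ∪ G2 = Finset.univ) (hr1 : 1 ≤ r1) (hr2 : 1 ≤ r2) (u : U) :
    ∃ x : Blowup G1 G2 r1 r2, bproj x = u := by
  have hu : u ∈ G1 ∪ G2 := hunion ▸ Finset.mem_univ u
  rcases Finset.mem_union.1 hu with h | h
  · exact ⟨Sum.inl (⟨u, h⟩, ⟨0, hr1⟩), rfl⟩
  · exact ⟨Sum.inr (⟨u, h⟩, ⟨0, hr2⟩), rfl⟩

/-- Choosing the `a`-th copy of the `a`-th point of `S ∩ G_i` is a one-per-group choice whose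
originals cover `S`. -/
lemma exists_onePerGroup_cover (hunion : G1 ∪ G2 = Finset.univ) {S : Finset U}
    (h1 : (S ∩ G1).card = r1) (h2 : (S ∩ G2).card = r2) :
    ∃ Shat : Finset (Blowup G1 G2 r1 r2), OnePerGroup G1 G2 r1 r2 Shat ∧
      ∀ s ∈ S, ∃ x ∈ Shat, bproj x = s := by
  let e1 := Finset.equivFinOfCardEq h1
  let e2 := Finset.equivFinOfCardEq h2
  have m1 : ∀ a, ((e1.symm a : U)) ∈ G1 := fun a => (Finset.mem_inter.1 (e1.symm a).2).2
  have m2 : ∀ a, ((e2.symm a : U)) ∈ G2 := fun a => (Finset.mem_inter.1 (e2.symm a).2).2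
  let f1 : Fin r1 → Blowup G1 G2 r1 r2 := fun a => Sum.inl (⟨e1.symm a, m1 a⟩, a)
  let f2 : Fin r2 → Blowup G1 G2 r1 r2 := fun a => Sum.inr (⟨e2.symm a, m2 a⟩, a)
  refine ⟨Finset.univ.image f1 ∪ Finset.univ.image f2, ⟨fun a => ?_, fun a => ?_⟩, fun s hs => ?_⟩
  · refine Finset.card_eq_one.2 ⟨f1 a, ?_⟩
    ext x
    simp only [grp1, f1, f2, Finset.mem_inter, Finset.mem_union, Finset.mem_image,
      Finset.mem_univ, true_and, Finset.mem_singleton]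
    constructor
    · rintro ⟨⟨b, rfl⟩ | ⟨b, rfl⟩, u, hu⟩
      · have := (Prod.ext_iff.1 (Sum.inl.inj hu)).2
        simp only at this
        rw [this]
      · exact absurd hu Sum.inl_ne_inr
    · rintro rfl
      exact ⟨Or.inl ⟨a, rfl⟩, _, rfl⟩
  · refine Finset.card_eq_one.2 ⟨f2 a, ?_⟩
    ext x
    simp only [grp2, f1, f2, Finset.mem_inter, Finset.mem_union, Finset.mem_image,
      Finset.mem_univ, true_and, Finset.mem_singleton]
    constructor
    · rintro ⟨⟨b, rfl⟩ | ⟨b, rfl⟩, u, hu⟩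
      · exact absurd hu Sum.inr_ne_inl
      · have := (Prod.ext_iff.1 (Sum.inr.inj hu)).2
        simp only at this
        rw [this]
    · rintro rfl
      exact ⟨Or.inr ⟨a, rfl⟩, _, rfl⟩
  · have hu : s ∈ G1 ∪ G2 := hunion ▸ Finset.mem_univ s
    rcases Finset.mem_union.1 hu with h | h
    · refine ⟨f1 (e1 ⟨s, Finset.mem_inter.2 ⟨hs, h⟩⟩),
        Finset.mem_union_left _ (Finset.mem_image_of_mem _ (Finset.mem_univ _)), ?_⟩
      simp [f1, bproj]
    · refine ⟨f2 (e2 ⟨s, Finset.mem_inter.2 ⟨hs, h⟩⟩),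
        Finset.mem_union_right _ (Finset.mem_image_of_mem _ (Finset.mem_univ _)), ?_⟩
      simp [f2, bproj]

/-- The originals of a one-per-group choice extend to a set with exactly `r_i` points in `G_i`.
The extension is needed because two chosen copies may have the same original. -/
lemma exists_superset_bproj (hdisj : Disjoint G1 G2) (hr1' : r1 ≤ G1.card) (hr2' : r2 ≤ G2.card)
    {Shat : Finset (Blowup G1 G2 r1 r2)} (h : OnePerGroup G1 G2 r1 r2 Shat) :
    ∃ S : Finset U, (S ∩ G1).card = r1 ∧ (S ∩ G2).card = r2 ∧ ∀ x ∈ Shat, bproj x ∈ S := by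
  choose x1 hx1 using fun a => Finset.card_eq_one.1 (h.1 a)
  choose x2 hx2 using fun a => Finset.card_eq_one.1 (h.2 a)
  let P1 := (Finset.univ.image fun a => bproj (x1 a)) ∩ G1
  let P2 := (Finset.univ.image fun a => bproj (x2 a)) ∩ G2
  have c1 : P1.card ≤ r1 := (Finset.card_le_card Finset.inter_subset_left).trans
    (Finset.card_image_le.trans (by simp))
  have c2 : P2.card ≤ r2 := (Finset.card_le_card Finset.inter_subset_left).trans
    (Finset.card_image_le.trans (by simp))
  obtain ⟨T1, hP1, hT1, hc1⟩ := Finset.exists_subsuperset_card_eq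
    (Finset.inter_subset_right : P1 ⊆ G1) c1 hr1'
  obtain ⟨T2, hP2, hT2, hc2⟩ := Finset.exists_subsuperset_card_eq
    (Finset.inter_subset_right : P2 ⊆ G2) c2 hr2'
  refine ⟨T1 ∪ T2, ?_, ?_, ?_⟩
  · rw [Finset.union_inter_distrib_right, Finset.inter_eq_left.2 hT1,
      Finset.disjoint_iff_inter_eq_empty.1 (hdisj.symm.mono_left hT2), Finset.union_empty, hc1]
  · rw [Finset.union_inter_distrib_right, Finset.inter_eq_left.2 hT2,
      Finset.disjoint_iff_inter_eq_empty.1 (hdisj.mono_left hT1), Finset.empty_union, hc2]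
  · rintro (⟨u, a⟩ | ⟨u, a⟩) hx
    · have : (Sum.inl (u, a) : Blowup G1 G2 r1 r2) = x1 a := by
        rw [← Finset.mem_singleton, ← hx1 a]
        simp [grp1, hx]
      refine Finset.mem_union_left _ (hP1 (Finset.mem_inter.2 ⟨?_, u.2⟩))
      exact Finset.mem_image.2 ⟨a, Finset.mem_univ _, by rw [← this]⟩
    · have : (Sum.inr (u, a) : Blowup G1 G2 r1 r2) = x2 a := by
        rw [← Finset.mem_singleton, ← hx2 a]
        simp [grp2, hx]
      refine Finset.mem_union_right _ (hP2 (Finset.mem_inter.2 ⟨?_, u.2⟩))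
      exact Finset.mem_image.2 ⟨a, Finset.mem_univ _, by rw [← this]⟩

variable {d : U → U → ℝ} {δ : ℝ} {d' : Blowup G1 G2 r1 r2 → Blowup G1 G2 r1 r2 → ℝ}

/-- A fair set of centers whose cost is at least the copy distance `δ` lifts to a one-per-group
choice in the blow-up that costs no more. -/
lemma exists_lift (hunion : G1 ∪ G2 = Finset.univ) (hr1 : 1 ≤ r1) (hr2 : 1 ≤ r2)
    (hδ0 : 0 ≤ δ)
    (h0 : ∀ x, d' x x = 0) (hcopy : ∀ x y, x ≠ y → bproj x = bproj y → d' x y = δ)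
    (hdist : ∀ x y, bproj x ≠ bproj y → d' x y = d (bproj x) (bproj y))
    {S : Finset U} (h1 : (S ∩ G1).card = r1) (h2 : (S ∩ G2).card = r2) (hδS : δ ≤ kcost d S) :
    ∃ Shat, OnePerGroup G1 G2 r1 r2 Shat ∧ kcost d' Shat ≤ kcost d S := by
  obtain ⟨Shat, hone, hcov⟩ := exists_onePerGroup_cover hunion h1 h2
  have hne : (S ∩ G1).Nonempty := Finset.card_pos.1 (by omega)
  have hS : S.Nonempty := hne.mono Finset.inter_subset_left
  have : Nonempty (Blowup G1 G2 r1 r2) := by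
    obtain ⟨u, -⟩ := hS
    exact ⟨(exists_mem_bproj_eq hunion hr1 hr2 u).choose⟩
  refine ⟨Shat, hone, kcost_le fun x => ?_⟩
  obtain ⟨s, hs, hle⟩ := exists_le_kcost d hS (bproj x)
  obtain ⟨y, hy, rfl⟩ := hcov s hs
  refine ⟨y, hy, ?_⟩
  by_cases hb : bproj x = bproj y
  · by_cases hxy : x = y
    · rw [hxy, h0]
      exact hδ0.trans hδS
    · rwa [hcopy x y hxy hb]
  · rwa [hdist x y hb]

/-- A one-per-group choice in the blow-up projects, after enlarging, to a fair set of centers that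
costs no more. -/
lemma exists_proj [Nonempty U] (hunion : G1 ∪ G2 = Finset.univ) (hdisj : Disjoint G1 G2)
    (hr1 : 1 ≤ r1) (hr2 : 1 ≤ r2) (hr1' : r1 ≤ G1.card) (hr2' : r2 ≤ G2.card)
    (hd : ∀ u, d u u = 0) (hδ0 : 0 ≤ δ)
    (h0 : ∀ x, d' x x = 0) (hcopy : ∀ x y, x ≠ y → bproj x = bproj y → d' x y = δ)
    (hdist : ∀ x y, bproj x ≠ bproj y → d' x y = d (bproj x) (bproj y))
    {Shat : Finset (Blowup G1 G2 r1 r2)} (hone : OnePerGroup G1 G2 r1 r2 Shat) :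
    ∃ S : Finset U, (S ∩ G1).card = r1 ∧ (S ∩ G2).card = r2 ∧ kcost d S ≤ kcost d' Shat := by
  obtain ⟨S, h1, h2, hmem⟩ := exists_superset_bproj hdisj hr1' hr2' hone
  have hne : (Shat ∩ grp1 G1 G2 r1 r2 ⟨0, hr1⟩).Nonempty :=
    Finset.card_pos.1 (by rw [hone.1]; exact one_pos)
  have hS : Shat.Nonempty := hne.mono Finset.inter_subset_left
  refine ⟨S, h1, h2, kcost_le fun u => ?_⟩
  obtain ⟨x, rfl⟩ := exists_mem_bproj_eq (G1 := G1) (G2 := G2) hunion hr1 hr2 u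
  obtain ⟨y, hy, hle⟩ := exists_le_kcost d' hS x
  refine ⟨bproj y, hmem y hy, le_trans ?_ hle⟩
  by_cases hb : bproj x = bproj y
  · rw [hb, hd]
    by_cases hxy : x = y
    · rw [hxy, h0]
    · rwa [hcopy x y hxy hb]
  · rw [hdist x y hb]

end Transport

/-- The optimum of the one-per-group blow-up instance equals the
optimum of the two-group fair instance (with `r_i` centers required in `G_i`). -/
theorem fair_kcenter_blowup_opt_eq_two_group_opt
    {U : Type*} [Fintype U] [DecidableEq U] (hcard : 1 < Fintype.card U)
    (d : U → U → ℝ)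
    (hsymm : ∀ a b : U, d a b = d b a)
    (heq : ∀ a b : U, d a b = 0 ↔ a = b)
    (htri : ∀ a b c : U, d a c ≤ d a b + d b c)
    (G1 G2 : Finset U) (hG1 : G1.Nonempty) (hG2 : G2.Nonempty)
    (hdisj : Disjoint G1 G2) (hunion : G1 ∪ G2 = Finset.univ)
    (r1 r2 : ℕ) (hr1 : 1 ≤ r1) (hr2 : 1 ≤ r2)
    (hr1' : r1 ≤ G1.card) (hr2' : r2 ≤ G2.card)
    (Δ δ : ℝ)
    (hΔ : Δ = sInf {r : ℝ | ∃ u v : U, u ≠ v ∧ r = d u v})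
    (hδ : δ = Δ / 2)
    (d' : Blowup G1 G2 r1 r2 → Blowup G1 G2 r1 r2 → ℝ)
    (h0 : ∀ x : Blowup G1 G2 r1 r2, d' x x = 0)
    (hcopy : ∀ x y : Blowup G1 G2 r1 r2, x ≠ y → bproj x = bproj y → d' x y = δ)
    (hdist : ∀ x y : Blowup G1 G2 r1 r2,
      bproj x ≠ bproj y → d' x y = d (bproj x) (bproj y))
    (k : ℕ) (hk : k = r1 + r2) (hkU : k < Fintype.card U) :
    sInf {c : ℝ | ∃ Shat : Finset (Blowup G1 G2 r1 r2),
        OnePerGroup G1 G2 r1 r2 Shat ∧ c = kcost d' Shat} =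
    sInf {c : ℝ | ∃ S : Finset U,
        (S ∩ G1).card = r1 ∧ (S ∩ G2).card = r2 ∧ c = kcost d S} := by
  have hd : ∀ u, d u u = 0 := fun u => (heq u u).2 rfl
  have hnn : ∀ u v, 0 ≤ d u v := fun u v => by
    linarith [htri u v u, hsymm u v, hd u]
  have hΔ0 : 0 ≤ Δ := by
    rw [hΔ]
    apply Real.sInf_nonneg
    rintro _ ⟨u, v, -, rfl⟩
    exact hnn u v
  have hΔle : ∀ u v, u ≠ v → Δ ≤ d u v := fun u v huv => by
    rw [hΔ]
    refine csInf_le ⟨0, ?_⟩ ⟨u, v, huv, rfl⟩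
    rintro _ ⟨u, v, -, rfl⟩
    exact hnn u v
  have hδ0 : 0 ≤ δ := by linarith
  have : Nonempty U := ⟨hG1.choose⟩
  -- A fair set has `k < |U|` points, so it misses a client, whose nearest center is `Δ`-far.
  have hδS : ∀ S : Finset U, (S ∩ G1).card = r1 → (S ∩ G2).card = r2 → δ ≤ kcost d S := by
    intro S h1 h2
    have hcardS : S.card = k := by
      rw [hk, ← h1, ← h2, ← Finset.card_union_of_disjoint
        (hdisj.mono Finset.inter_subset_right Finset.inter_subset_right),
        ← Finset.inter_union_distrib_left, hunion, Finset.inter_univ]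
    obtain ⟨u, hu⟩ : ∃ u, u ∉ S := by
      by_contra! hall
      rw [Finset.eq_univ_of_forall hall, Finset.card_univ] at hcardS
      omega
    obtain ⟨s, hs, hle⟩ := exists_le_kcost d (Finset.card_pos.1 (by omega : 0 < S.card)) u
    have := hΔle u s fun h => hu (h ▸ hs)
    linarith
  have hbddA : BddBelow {c : ℝ | ∃ Shat : Finset (Blowup G1 G2 r1 r2),
      OnePerGroup G1 G2 r1 r2 Shat ∧ c = kcost d' Shat} := by
    refine ((Set.finite_range (kcost d')).subset ?_).bddBelow
    rintro _ ⟨S, -, rfl⟩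
    exact ⟨S, rfl⟩
  have hbddB : BddBelow {c : ℝ | ∃ S : Finset U,
      (S ∩ G1).card = r1 ∧ (S ∩ G2).card = r2 ∧ c = kcost d S} := by
    refine ((Set.finite_range (kcost d)).subset ?_).bddBelow
    rintro _ ⟨S, -, -, rfl⟩
    exact ⟨S, rfl⟩
  obtain ⟨S₀, h1₀, h2₀⟩ : ∃ S : Finset U, (S ∩ G1).card = r1 ∧ (S ∩ G2).card = r2 := by
    obtain ⟨T1, hT1, hc1⟩ := Finset.exists_subset_card_eq hr1'
    obtain ⟨T2, hT2, hc2⟩ := Finset.exists_subset_card_eq hr2'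
    refine ⟨T1 ∪ T2, ?_, ?_⟩
    · rw [Finset.union_inter_distrib_right, Finset.inter_eq_left.2 hT1,
        Finset.disjoint_iff_inter_eq_empty.1 (hdisj.symm.mono_left hT2), Finset.union_empty, hc1]
    · rw [Finset.union_inter_distrib_right, Finset.inter_eq_left.2 hT2,
        Finset.disjoint_iff_inter_eq_empty.1 (hdisj.mono_left hT1), Finset.empty_union, hc2]
  apply le_antisymm
  · refine le_csInf ⟨_, S₀, h1₀, h2₀, rfl⟩ ?_
    rintro _ ⟨S, h1, h2, rfl⟩
    obtain ⟨Shat, hone, hle⟩ :=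
      exists_lift hunion hr1 hr2 hδ0 h0 hcopy hdist h1 h2 (hδS S h1 h2)
    exact csInf_le_of_le hbddA ⟨Shat, hone, rfl⟩ hle
  · obtain ⟨Shat₀, hone₀, -⟩ := exists_onePerGroup_cover hunion h1₀ h2₀
    refine le_csInf ⟨_, Shat₀, hone₀, rfl⟩ ?_
    rintro _ ⟨Shat, hone, rfl⟩
    obtain ⟨S, h1, h2, hle⟩ :=
      exists_proj hunion hdisj hr1 hr2 hr1' hr2' hd hδ0 h0 hcopy hdist hone
    exact csInf_le_of_le hbddB ⟨S, h1, h2, rfl⟩ hle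
end
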